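/- Let μ ∈ ℝ, η ≥ 0, and suppose (γ0, γ1, γ2, γ3, γ4) ∈ ℝ⁵ is a solution of the system S2(μ,η). Then γ0 + γ1 + γ2 + γ3 + γ4 = 0 and (γ1 + γ3)² = (1+η)(1−3μ); in particular no real solution of S2(μ,η) exists when μ > 1/3. -/

import Mathlib

/-- The `k = δ = 2` reduced system `S2(μ,η)` for `(γ0, γ1, γ2, γ3, γ4)`. -/
def S2 (μ η γ0 γ1 γ2 γ3 γ4 : ℝ) : Prop :=
  2 * γ0 * γ4 = -μ / 2 ∧
  2 * γ0 * γ3 + 2 * γ1 * γ4 = (1 / 2) * η * μ + 3 * μ ∧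
  2 * γ0 * γ2 + 2 * γ1 * γ3 + 2 * γ2 * γ4 = -3 * η * μ - (11 / 2) * μ + 1 / 2 ∧
  2 * γ0 * γ1 + 2 * γ1 * γ2 + 2 * γ2 * γ3 + 2 * γ3 * γ4
    = (11 / 2) * η * μ - 2 * η + 3 * μ - 2 ∧
  γ0 ^ 2 + γ1 ^ 2 + γ2 ^ 2 + γ3 ^ 2 + γ4 ^ 2 = -3 * η * μ + 2 * η + 3 / 2

/-!
Let `Γ(z) = γ0 + γ1 z + γ2 z² + γ3 z³ + γ4 z⁴`. The left-hand sides of `S2` are, from the first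
to the last, the sums of the coefficients of `zᵏ` and `z⁻ᵏ` in `Γ(z) Γ(z⁻¹)` for `k = 4, 3, 2, 1`
and the constant coefficient. At `z = ±1` this product is `Γ(z)²`, so the right-hand sides give
`Γ(1)² = 0` and `Γ(-1)² = 4 (1 + η) (1 - 3 μ)`. Since `Γ(1) = 0`, also `Γ(-1) = -2 (γ1 + γ3)`.
-/

namespace S2

variable {μ η γ0 γ1 γ2 γ3 γ4 : ℝ}

theorem sq_signed_sum (h : S2 μ η γ0 γ1 γ2 γ3 γ4) {ε : ℝ} (hε : ε ^ 2 = 1) :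
    (γ0 + ε * γ1 + γ2 + ε * γ3 + γ4) ^ 2 = 2 * (1 - ε) * ((1 + η) * (1 - 3 * μ)) := by
  obtain ⟨lag_four, lag_three, lag_two, lag_one, lag_zero⟩ := h
  calc (γ0 + ε * γ1 + γ2 + ε * γ3 + γ4) ^ 2
    _ = (γ0 ^ 2 + γ1 ^ 2 + γ2 ^ 2 + γ3 ^ 2 + γ4 ^ 2)
        + ε * (2 * γ0 * γ1 + 2 * γ1 * γ2 + 2 * γ2 * γ3 + 2 * γ3 * γ4)
        + (2 * γ0 * γ2 + 2 * γ1 * γ3 + 2 * γ2 * γ4)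
        + ε * (2 * γ0 * γ3 + 2 * γ1 * γ4)
        + 2 * γ0 * γ4 := by linear_combination (γ1 + γ3) ^ 2 * hε
    _ = 2 * (1 - ε) * ((1 + η) * (1 - 3 * μ)) := by
      rw [lag_zero, lag_one, lag_two, lag_three, lag_four]
      ring

theorem sum_eq_zero (h : S2 μ η γ0 γ1 γ2 γ3 γ4) : γ0 + γ1 + γ2 + γ3 + γ4 = 0 := by
  simpa using h.sq_signed_sum (one_pow 2)

theorem sq_alternating_sum (h : S2 μ η γ0 γ1 γ2 γ3 γ4) :
    (γ0 - γ1 + γ2 - γ3 + γ4) ^ 2 = 4 * ((1 + η) * (1 - 3 * μ)) := by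
  linear_combination h.sq_signed_sum (neg_one_sq (R := ℝ))

theorem sq_odd_sum (h : S2 μ η γ0 γ1 γ2 γ3 γ4) :
    (γ1 + γ3) ^ 2 = (1 + η) * (1 - 3 * μ) := by
  have alternating_sum : γ0 - γ1 + γ2 - γ3 + γ4 = -2 * (γ1 + γ3) := by
    linear_combination h.sum_eq_zero
  have four_mul_sq := h.sq_alternating_sum
  rw [alternating_sum] at four_mul_sq
  linear_combination four_mul_sq / 4

theorem le_one_third (h : S2 μ η γ0 γ1 γ2 γ3 γ4) (hη : -1 < η) : μ ≤ 1 / 3 := by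
  have product_nonneg : 0 ≤ (1 + η) * (1 - 3 * μ) := h.sq_odd_sum ▸ sq_nonneg (γ1 + γ3)
  have factor_nonneg : 0 ≤ 1 - 3 * μ := nonneg_of_mul_nonneg_right product_nonneg (by linarith)
  linarith

end S2

theorem S2_necessary_conditions_general (μ η : ℝ) :
    (∀ γ0 γ1 γ2 γ3 γ4 : ℝ, S2 μ η γ0 γ1 γ2 γ3 γ4 →
        γ0 + γ1 + γ2 + γ3 + γ4 = 0 ∧ (γ1 + γ3) ^ 2 = (1 + η) * (1 - 3 * μ)) ∧
    (-1 < η → 1 / 3 < μ → ¬ ∃ γ0 γ1 γ2 γ3 γ4 : ℝ, S2 μ η γ0 γ1 γ2 γ3 γ4) := by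
  refine ⟨fun _ _ _ _ _ h => ⟨h.sum_eq_zero, h.sq_odd_sum⟩, ?_⟩
  rintro hη hμ ⟨_, _, _, _, _, h⟩
  exact hμ.not_ge (h.le_one_third hη)

/-- **Necessary conditions on solutions of `S2(μ,η)` and the weak coupling condition.**
Any real solution of `S2(μ,η)` with `η ≥ 0` satisfies `γ0 + γ1 + γ2 + γ3 + γ4 = 0` and
`(γ1 + γ3)² = (1+η)(1-3μ)`; in particular no real solution exists when `μ > 1/3`. -/
theorem S2_necessary_conditions (μ η : ℝ) (hη : 0 ≤ η) :
    (∀ γ0 γ1 γ2 γ3 γ4 : ℝ, S2 μ η γ0 γ1 γ2 γ3 γ4 →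
        γ0 + γ1 + γ2 + γ3 + γ4 = 0 ∧ (γ1 + γ3) ^ 2 = (1 + η) * (1 - 3 * μ)) ∧
    (1 / 3 < μ → ¬ ∃ γ0 γ1 γ2 γ3 γ4 : ℝ, S2 μ η γ0 γ1 γ2 γ3 γ4) := by
  obtain ⟨conditions, no_solution⟩ := S2_necessary_conditions_general μ η
  exact ⟨conditions, no_solution (by linarith)⟩
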